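/- For any positive integer k, the domination ratio of Γ(ℤ, {1, 3k}) equals 2k/(6k-1), and the domination ratio of Γ(ℤ, {1, -3k+1}) also equals 2k/(6k-1) (for k ≥ 2 in the latter case so that -3k+1 ∉ {0,1}). -/

import Mathlib

open Filter

/-- Lower density of a set of integers. -/
noncomputable def lowerDensity (D : Set ℤ) : ℝ :=
  Filter.liminf (fun n : ℕ =>
    ((D ∩ Set.Icc (-(n : ℤ)) (n : ℤ)).ncard : ℝ) / (2 * (n : ℝ) + 1)) Filter.atTop

/-- `D` is a dominating set of the integer distance digraph `Γ(ℤ,S)`. -/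
def Dominating (S D : Set ℤ) : Prop :=
  ∀ m : ℤ, m ∈ D ∨ ∃ u ∈ D, ∃ s ∈ S, m = u + s

/-- Domination ratio of `Γ(ℤ,S)`. -/
noncomputable def dominationRatio (S : Set ℤ) : ℝ :=
  sInf (lowerDensity '' {D : Set ℤ | Dominating S D})

/-- `D` is an efficient dominating set of `Γ(ℤ,S)`: every integer is dominated
by exactly one element of `D`. -/
def EffDominating (S D : Set ℤ) : Prop :=
  ∀ m : ℤ, ∃! u, u ∈ D ∧ (u = m ∨ m - u ∈ S)

/-!
The lower density of `D` is the value at `D` of some translation-invariant mean on `ℤ`, obtained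
as an ultrafilter limit, so densities can be computed exactly, without boundary terms.

Inclusion–exclusion on `D`, `D - 1`, `D - 2` relates the density of `D` to the numbers of gaps of
length one, of gaps of length at most two, and of triples of consecutive integers missed by `D`.
If `D` dominates for `{1, 3k}`, then each missed triple forces, by a translation, a gap of length
one. If moreover `k` consecutive gaps had length three, a further gap of length one would be
forced, one that no missed triple accounts for. Weighing these counts gives the lower bound
`2k / (6k - 1)`, and a periodic set of period `6k - 1` attains it.

The reflection `D ↦ -D` exchanges the connection sets `{a, b}` and `{a, a - b}`.
-/

section InvariantMean

open Pointwise

/-- A finitely additive probability on all subsets of `X` that is invariant under the action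
of `G`. It plays the role of a density for which all limits exist and translation is exact. -/
structure IsInvariantMean (G : Type*) {X : Type*} [VAdd G X] (m : Set X → ℝ) : Prop where
  nonneg (s : Set X) : 0 ≤ m s
  univ : m Set.univ = 1
  union {s t : Set X} : Disjoint s t → m (s ∪ t) = m s + m t
  vadd (g : G) (s : Set X) : m (g +ᵥ s) = m s

namespace IsInvariantMean

section VAdd

variable {G X ι : Type*} [VAdd G X] {m : Set X → ℝ} {s t : Set X}

lemma empty (hm : IsInvariantMean G m) : m ∅ = 0 := by
  simpa using hm.union (Set.disjoint_empty ∅)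

lemma sdiff (hm : IsInvariantMean G m) (h : s ⊆ t) : m (t \ s) = m t - m s := by
  rw [eq_sub_iff_add_eq', ← hm.union Set.disjoint_sdiff_right, Set.union_sdiff_cancel h]

lemma mono (hm : IsInvariantMean G m) (h : s ⊆ t) : m s ≤ m t := by
  linarith [hm.sdiff h, hm.nonneg (t \ s)]

lemma compl (hm : IsInvariantMean G m) (s : Set X) : m sᶜ = 1 - m s := by
  rw [Set.compl_eq_univ_sdiff, hm.sdiff s.subset_univ, hm.univ]

lemma union_add_inter (hm : IsInvariantMean G m) (s t : Set X) :
    m (s ∪ t) + m (s ∩ t) = m s + m t := by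
  rw [← Set.union_sdiff_self, hm.union Set.disjoint_sdiff_right,
    ← Set.sdiff_inter_self_eq_sdiff (t := s), hm.sdiff Set.inter_subset_right]
  ring

lemma union_le (hm : IsInvariantMean G m) (s t : Set X) : m (s ∪ t) ≤ m s + m t := by
  linarith [hm.union_add_inter s t, hm.nonneg (s ∩ t)]

lemma biUnion_le (hm : IsInvariantMean G m) (I : Finset ι) (s : ι → Set X) :
    m (⋃ i ∈ I, s i) ≤ ∑ i ∈ I, m (s i) := by
  classical
  induction I using Finset.induction_on with
  | empty => simp [hm.empty]
  | insert i I hi ih =>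
    rw [Finset.set_biUnion_insert, Finset.sum_insert hi]
    exact (hm.union_le _ _).trans (by gcongr)

lemma biUnion_eq (hm : IsInvariantMean G m) {I : Finset ι} {s : ι → Set X}
    (hs : (I : Set ι).PairwiseDisjoint s) : m (⋃ i ∈ I, s i) = ∑ i ∈ I, m (s i) := by
  classical
  induction I using Finset.induction_on with
  | empty => simp [hm.empty]
  | insert i I hi ih =>
    rw [Finset.coe_insert, Set.pairwiseDisjoint_insert_of_notMem (by simpa using hi)] at hs
    rw [Finset.set_biUnion_insert, Finset.sum_insert hi, ← ih hs.1, hm.union]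
    exact Set.disjoint_iUnion₂_right.mpr hs.2

end VAdd

lemma setOf_add_mem {G : Type*} [AddCommGroup G] {m : Set G → ℝ} (hm : IsInvariantMean G m)
    (g : G) (s : Set G) : m {x | x + g ∈ s} = m s := by
  rw [← hm.vadd (-g) s]
  congr 1 with x
  simp [Set.mem_vadd_set_iff_neg_vadd_mem, add_comm]

section Int

variable {m : Set ℤ → ℝ} {p : ℤ}

lemma setOf_modEq (hm : IsInvariantMean ℤ m) (hp : 0 < p) (a : ℤ) :
    m {x | x ≡ a [ZMOD p]} = 1 / p := by
  have translate (b : ℤ) : m {x | x ≡ b [ZMOD p]} = m {x | x ≡ 0 [ZMOD p]} := by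
    rw [← hm.setOf_add_mem (-b) {x | x ≡ 0 [ZMOD p]}]
    congr 1 with x
    simp [Int.modEq_iff_dvd, ← sub_eq_add_neg, dvd_sub_comm]
  have cover : ⋃ b ∈ Finset.Ico 0 p, {x | x ≡ b [ZMOD p]} = Set.univ := by
    refine Set.eq_univ_of_forall fun x => Set.mem_biUnion (x := x % p) ?_ (Int.mod_modEq x p).symm
    simp [Int.emod_nonneg x hp.ne', Int.emod_lt_of_pos x hp]
  have disjoint : (Finset.Ico 0 p : Set ℤ).PairwiseDisjoint fun b => {x | x ≡ b [ZMOD p]} := by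
    intro b hb c hc hbc
    refine Set.disjoint_left.mpr fun x hxb hxc => hbc ?_
    simp only [Finset.coe_Ico, Set.mem_Ico] at hb hc
    rw [← Int.emod_eq_of_lt hb.1 hb.2, ← Int.emod_eq_of_lt hc.1 hc.2]
    exact hxb.symm.trans hxc
  have total := hm.biUnion_eq disjoint
  simp only [cover, hm.univ, translate, Finset.sum_const, Int.card_Ico, sub_zero,
    nsmul_eq_mul] at total
  have cast : ((p.toNat : ℕ) : ℝ) = p := by exact_mod_cast Int.toNat_of_nonneg hp.le
  rw [translate, eq_div_iff (by exact_mod_cast hp.ne'), mul_comm, ← cast, ← total]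

lemma setOf_exists_modEq_le (hm : IsInvariantMean ℤ m) (hp : 0 < p) {ι : Type*} (I : Finset ι)
    (a : ι → ℤ) : m {x | ∃ i ∈ I, x ≡ a i [ZMOD p]} ≤ I.card / p := by
  calc m {x | ∃ i ∈ I, x ≡ a i [ZMOD p]}
      = m (⋃ i ∈ I, {x | x ≡ a i [ZMOD p]}) := by congr 1 with x; simp
    _ ≤ ∑ i ∈ I, m {x | x ≡ a i [ZMOD p]} := hm.biUnion_le _ _
    _ = I.card / p := by simp [hm.setOf_modEq hp, div_eq_mul_inv]

end Int

end IsInvariantMean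

end InvariantMean

section LowerDensity

open MeasureTheory Pointwise Topology
open scoped ENNReal symmDiff

section Foelner

variable {G X ι : Type*} [AddGroup G] [AddAction G X] [MeasurableSpace X] {μ : Measure X}
  {u : Ultrafilter ι} {F : ι → Set X}

lemma addFoelner_mean_ne_top (hF : IsAddFoelner G μ u F) (s : Set X) :
    IsAddFoelner.mean μ u F s ≠ ∞ := by
  refine ne_top_of_le_ne_top ENNReal.one_ne_top (le_of_tendsto (hF.tendsto_nhds_mean s) ?_)
  exact .of_forall fun i => ENNReal.div_le_of_le_mul <| by
    simpa using measure_mono Set.inter_subset_right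

lemma isInvariantMean_toReal_mean [DiscreteMeasurableSpace X] [VAddInvariantMeasure G X μ]
    (hF : IsAddFoelner G μ u F) :
    IsInvariantMean G fun s => (IsAddFoelner.mean μ u F s).toReal := by
  have add {s t : Set X} (hst : Disjoint s t) :=
    hF.mean_union_eq_add_of_disjoint s t .of_discrete hst
  exact
    { nonneg := fun _ => ENNReal.toReal_nonneg
      univ := by simp [hF.mean_univ_eq_zero]
      union := fun hst => by
        rw [add hst, ENNReal.toReal_add] <;> exact addFoelner_mean_ne_top hF _
      vadd := fun g s => by rw [hF.mean_vadd_eq_mean] }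

end Foelner

lemma count_Icc_neg_natCast (n : ℕ) :
    Measure.count (Set.Icc (-(n : ℤ)) n) = 2 * (n : ℝ≥0∞) + 1 := by
  rw [← Finset.coe_Icc, Measure.count_apply_finset, Int.card_Icc,
    show ((n : ℤ) + 1 - -n).toNat = 2 * n + 1 by omega]
  push_cast
  rfl

lemma count_vadd_Icc_symmDiff_le (g : ℤ) (n : ℕ) :
    Measure.count ((g +ᵥ Set.Icc (-(n : ℤ)) n) ∆ Set.Icc (-(n : ℤ)) n) ≤
      ((4 * g.natAbs + 2 : ℕ) : ℝ≥0∞) := by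
  let ends : Finset ℤ := Finset.Icc (-n - |g|) (-n + |g|) ∪ Finset.Icc (n - |g|) (n + |g|)
  have subset_ends : (g +ᵥ Set.Icc (-(n : ℤ)) n) ∆ Set.Icc (-(n : ℤ)) n ⊆ ends := by
    intro x hx
    simp only [Set.mem_symmDiff, Set.mem_vadd_set_iff_neg_vadd_mem, vadd_eq_add, Set.mem_Icc] at hx
    simp only [ends, Finset.coe_union, Finset.coe_Icc, Set.mem_union, Set.mem_Icc]
    grind
  have card_ends : ends.card ≤ 4 * g.natAbs + 2 := by
    refine (Finset.card_union_le _ _).trans ?_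
    simp only [Int.card_Icc]
    grind
  refine (measure_mono subset_ends).trans ?_
  rw [Measure.count_apply_finset]
  exact_mod_cast card_ends

lemma isAddFoelner_Icc_neg_natCast :
    IsAddFoelner ℤ Measure.count atTop fun n : ℕ => Set.Icc (-(n : ℤ)) n where
  eventually_measurableSet := .of_forall fun _ => .of_discrete
  eventually_meas_ne_zero := .of_forall fun n => by simp [count_Icc_neg_natCast]
  eventually_meas_ne_top := .of_forall fun n => by
    rw [count_Icc_neg_natCast]
    finiteness
  tendsto_meas_vadd_symmDiff g := by
    have tendsto_length : Tendsto (fun n : ℕ => 2 * (n : ℝ≥0∞) + 1) atTop (𝓝 ∞) :=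
      tendsto_nhds_top_mono ENNReal.tendsto_nat_nhds_top <| .of_forall fun n => by
        calc (n : ℝ≥0∞) ≤ n + (n + 1) := le_self_add
          _ = 2 * n + 1 := by ring
    have tendsto_bound := ENNReal.Tendsto.const_div (a := ((4 * g.natAbs + 2 : ℕ) : ℝ≥0∞))
      tendsto_length (.inr (ENNReal.natCast_ne_top _))
    rw [ENNReal.div_top] at tendsto_bound
    refine tendsto_of_tendsto_of_tendsto_of_le_of_le tendsto_const_nhds tendsto_bound
      (fun _ => zero_le) fun n => ?_
    rw [count_Icc_neg_natCast]
    exact ENNReal.div_le_div_right (count_vadd_Icc_symmDiff_le g n) _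

lemma toReal_count_inter_Icc_div (D : Set ℤ) (n : ℕ) :
    (Measure.count (D ∩ Set.Icc (-(n : ℤ)) n) / Measure.count (Set.Icc (-(n : ℤ)) n)).toReal =
      ((D ∩ Set.Icc (-(n : ℤ)) n).ncard : ℝ) / (2 * (n : ℝ) + 1) := by
  have finite : (D ∩ Set.Icc (-(n : ℤ)) n).Finite := (Set.finite_Icc _ _).inter_of_right D
  rw [count_Icc_neg_natCast, Measure.count_apply .of_discrete, ← finite.cast_ncard_eq]
  simp only [ENat.toENNReal_coe, ENNReal.toReal_div, ENNReal.toReal_natCast]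
  norm_cast

lemma exists_isInvariantMean_eq_lowerDensity (D : Set ℤ) :
    ∃ m : Set ℤ → ℝ, IsInvariantMean ℤ m ∧ m D = lowerDensity D := by
  let density (n : ℕ) : ℝ := ((D ∩ Set.Icc (-(n : ℤ)) n).ncard : ℝ) / (2 * (n : ℝ) + 1)
  have density_le_one (n : ℕ) : density n ≤ 1 := by
    refine div_le_one_of_le₀ ?_ (by positivity)
    have card_le := Set.ncard_le_ncard (D.inter_subset_right (t := Set.Icc (-(n : ℤ)) n))
    rw [← Finset.coe_Icc, Set.ncard_coe_finset, Int.card_Icc] at card_le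
    rw [← Finset.coe_Icc]
    exact_mod_cast card_le.trans (by omega)
  have bounded_below : IsBoundedUnder (· ≥ ·) atTop density :=
    isBoundedUnder_of ⟨0, fun n => by positivity⟩
  have bounded_above : IsBoundedUnder (· ≤ ·) atTop density :=
    isBoundedUnder_of ⟨1, density_le_one⟩
  obtain ⟨u, hu, tendsto_lowerDensity⟩ := mapClusterPt_iff_ultrafilter.mp <|
    MapClusterPt.liminf bounded_above.isCoboundedUnder_ge bounded_below
  have hF := isAddFoelner_Icc_neg_natCast.mono hu
  have hm := isInvariantMean_toReal_mean hF
  refine ⟨_, hm, tendsto_nhds_unique ?_ tendsto_lowerDensity⟩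
  refine Tendsto.congr (toReal_count_inter_Icc_div D) ?_
  exact (ENNReal.tendsto_toReal (addFoelner_mean_ne_top hF D)).comp (hF.tendsto_nhds_mean D)

lemma lowerDensity_neg (D : Set ℤ) : lowerDensity (-D) = lowerDensity D := by
  unfold lowerDensity
  congr 1 with n
  have h : -D ∩ Set.Icc (-(n : ℤ)) n = -(D ∩ Set.Icc (-(n : ℤ)) n) := by
    rw [Set.inter_neg, Set.neg_Icc, neg_neg]
  rw [h, ← Set.image_neg_eq_neg, Set.ncard_image_of_injective _ neg_injective]

end LowerDensity

section Reflection

open Pointwise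

variable {a b : ℤ} {D : Set ℤ}

lemma dominating_pair_iff :
    Dominating {a, b} D ↔ ∀ x, x ∈ D ∨ x - a ∈ D ∨ x - b ∈ D := by
  simp [Dominating, and_or_left, exists_or, ← sub_eq_iff_eq_add, eq_comm]

lemma Dominating.neg (hD : Dominating {a, b} D) : Dominating {a, a - b} (-D) := by
  rw [dominating_pair_iff] at hD ⊢
  intro x
  have hx := hD (a - x)
  simp only [Set.mem_neg, neg_sub]
  rw [sub_sub_cancel_left] at hx
  rw [show a - b - x = a - x - b by ring]
  tauto

lemma dominationRatio_sub_right (a b : ℤ) :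
    dominationRatio {a, a - b} = dominationRatio {a, b} := by
  unfold dominationRatio
  congr 1
  ext x
  constructor
  · rintro ⟨D, hD, rfl⟩
    exact ⟨-D, by simpa using hD.neg, lowerDensity_neg D⟩
  · rintro ⟨D, hD, rfl⟩
    exact ⟨-D, hD.neg, lowerDensity_neg D⟩

end Reflection

section LowerBound

/-- The elements of `D` whose distance to the next element of `D` is one. -/
def unitGaps (D : Set ℤ) : Set ℤ := {c | c ∈ D ∧ c + 1 ∈ D}

/-- The elements of `D` whose distance to the next element of `D` is one or two. -/
def shortGaps (D : Set ℤ) : Set ℤ := {c | c ∈ D ∧ (c + 1 ∈ D ∨ c + 2 ∈ D)}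

/-- The starting points of triples of consecutive integers missed by `D`; a gap of length `g` in
`D` contains `g - 3` of them when `3 ≤ g`. -/
def missedTriples (D : Set ℤ) : Set ℤ := {x | x ∉ D ∧ x + 1 ∉ D ∧ x + 2 ∉ D}

variable {m : Set ℤ → ℝ} {D : Set ℤ} {s : ℤ} {k : ℕ}

lemma unitGaps_subset_shortGaps : unitGaps D ⊆ shortGaps D := fun _ hc => ⟨hc.1, .inl hc.2⟩

lemma IsInvariantMean.unitGaps_add_shortGaps (hm : IsInvariantMean ℤ m) (D : Set ℤ) :
    m (unitGaps D) + m (shortGaps D) + 1 = 3 * m D + m (missedTriples D) := by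
  let pairHit : Set ℤ := D ∪ {x | x + 1 ∈ D}
  have hpair : m pairHit + m (unitGaps D) = m D + m D := by
    have h := hm.union_add_inter D {x | x + 1 ∈ D}
    rwa [hm.setOf_add_mem] at h
  have htriple : m (D ∪ {x | x + 1 ∈ pairHit}) + m (D ∩ {x | x + 1 ∈ pairHit}) =
      m D + m pairHit := by
    have h := hm.union_add_inter D {x | x + 1 ∈ pairHit}
    rwa [hm.setOf_add_mem] at h
  have hshort : D ∩ {x | x + 1 ∈ pairHit} = shortGaps D := by
    ext x
    simp only [pairHit, shortGaps, Set.mem_inter_iff, Set.mem_union, Set.mem_ofPred_eq, add_assoc,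
      Int.reduceAdd]
  have hmissed : (D ∪ {x | x + 1 ∈ pairHit})ᶜ = missedTriples D := by
    ext x
    simp [pairHit, missedTriples, add_assoc]
  have hcompl := hm.compl (D ∪ {x | x + 1 ∈ pairHit})
  rw [hmissed] at hcompl
  rw [hshort] at htriple
  linarith

lemma Dominating.add_mem_unitGaps (hD : Dominating {1, s} D) {x : ℤ} (hx : x ∈ missedTriples D) :
    x + (1 - s) ∈ unitGaps D := by
  rw [dominating_pair_iff] at hD
  obtain ⟨h₀, h₁, h₂⟩ := hx
  have hs₁ := hD (x + 1)
  have hs₂ := hD (x + 2)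
  grind [unitGaps]

lemma Dominating.le_missedTriples (hD : Dominating {1, s} D) (hm : IsInvariantMean ℤ m) :
    m (missedTriples D) ≤ m (unitGaps D) :=
  (hm.mono fun _ hx => hD.add_mem_unitGaps hx).trans_eq (hm.setOf_add_mem (1 - s) (unitGaps D))

/-- If the next `k` gaps all have length three, only `d - 1` can dominate `d + 3k - 1`. -/
lemma Dominating.exists_gap_ne_three_or (hk : 0 < k) (hD : Dominating {1, 3 * (k : ℤ)} D) {d : ℤ}
    (hd : d ∈ D) :
    (∃ j < k, d + 3 * j ∈ shortGaps D ∨ d + 3 * j + 1 ∈ missedTriples D) ∨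
      (d - 1 ∈ unitGaps D ∧ d - 1 + (3 * k - 1) ∉ missedTriples D) := by
  refine or_iff_not_imp_left.mpr fun h => ?_
  push Not at h
  have hrun (j : ℕ) (hj : j ≤ k) : d + 3 * (j : ℤ) ∈ D := by
    induction j with
    | zero => simpa using hd
    | succ j ih =>
      have hj' := h j hj
      have := ih (by omega)
      grind [shortGaps, missedTriples]
  have hlast := h (k - 1) (by omega)
  have hprev := hrun (k - 1) (by omega)
  have hend := hrun k le_rfl
  rw [dominating_pair_iff] at hD
  have hbefore := hD (d + 3 * k - 1)
  grind [shortGaps, missedTriples, unitGaps]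

lemma Dominating.le_mul_add_sub (hk : 0 < k) (hD : Dominating {1, 3 * (k : ℤ)} D)
    (hm : IsInvariantMean ℤ m) :
    m D ≤ k * (m (shortGaps D) + m (missedTriples D)) +
      (m (unitGaps D) - m (missedTriples D)) := by
  let irregular : Set ℤ := shortGaps D ∪ {c | c + 1 ∈ missedTriples D}
  let excess : Set ℤ := unitGaps D \ {c | c + (3 * k - 1) ∈ missedTriples D}
  have hirregular : m irregular ≤ m (shortGaps D) + m (missedTriples D) :=
    (hm.union_le _ _).trans_eq (by rw [hm.setOf_add_mem])
  have hshift : m {d | d - 1 ∈ excess} = m excess := hm.setOf_add_mem (-1) excess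
  have hexcess : m excess = m (unitGaps D) - m (missedTriples D) := by
    rw [hm.sdiff, hm.setOf_add_mem]
    intro c hc
    have := hD.add_mem_unitGaps hc
    rwa [show c + (3 * k - 1) + (1 - 3 * k) = c by ring] at this
  have hcover : D ⊆
      (⋃ j ∈ Finset.range k, {d | d + 3 * (j : ℤ) ∈ irregular}) ∪ {d | d - 1 ∈ excess} := by
    intro d hd
    simpa [irregular, excess] using hD.exists_gap_ne_three_or hk hd
  calc m D
      ≤ m (⋃ j ∈ Finset.range k, {d | d + 3 * (j : ℤ) ∈ irregular}) + m {d | d - 1 ∈ excess} :=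
        (hm.mono hcover).trans (hm.union_le _ _)
    _ ≤ ∑ j ∈ Finset.range k, m {d | d + 3 * (j : ℤ) ∈ irregular} + m excess := by
        rw [hshift]
        gcongr
        exact hm.biUnion_le _ _
    _ = k * m irregular + m excess := by simp [hm.setOf_add_mem]
    _ ≤ _ := by rw [hexcess]; gcongr

theorem Dominating.le_mean (hk : 0 < k) (hD : Dominating {1, 3 * (k : ℤ)} D)
    (hm : IsInvariantMean ℤ m) : 2 * (k : ℝ) / (6 * k - 1) ≤ m D := by
  have hk' : (1 : ℝ) ≤ k := by exact_mod_cast hk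
  have htotal := hm.unitGaps_add_shortGaps D
  have hruns := hD.le_mul_add_sub hk hm
  have hmissed := hD.le_missedTriples hm
  have hunit := hm.mono (unitGaps_subset_shortGaps (D := D))
  rw [div_le_iff₀ (by linarith)]
  have hmissed' := mul_le_mul_of_nonneg_left hmissed (show (0 : ℝ) ≤ 3 * k - 1 by linarith)
  have hunit' := mul_le_mul_of_nonneg_left hunit (show (0 : ℝ) ≤ k by linarith)
  linear_combination hruns + 2 * k * htotal + hunit' + hmissed'

end LowerBound

section UpperBound

variable {k : ℕ}

/-- The arithmetic progression `0, 9k, …, 9k(2k - 1)` modulo `6k - 1`. Multiplication by `2`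
inverts multiplication by `3k` modulo `6k - 1`, so these are the `x` such that `2 * x` is
congruent to one of `0, 3, …, 6k - 3`. -/
def cyclicDominatingSet (k : ℕ) : Set ℤ :=
  {x | ∃ i ∈ Finset.range (2 * k), x ≡ 9 * k * i [ZMOD 6 * k - 1]}

lemma mem_cyclicDominatingSet_of_two_mul_modEq {i : ℕ} (hi : i < 2 * k) {x : ℤ}
    (hx : 2 * x ≡ 3 * i [ZMOD 6 * k - 1]) : x ∈ cyclicDominatingSet k := by
  refine ⟨i, Finset.mem_range.mpr hi, ?_⟩
  calc x ≡ x + (6 * k - 1) * x [ZMOD 6 * k - 1] := by simp [Int.modEq_iff_dvd]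
    _ = 3 * k * (2 * x) := by ring
    _ ≡ 3 * k * (3 * i) [ZMOD 6 * k - 1] := hx.mul_left _
    _ = 9 * k * i := by ring

lemma dominating_cyclicDominatingSet (hk : 0 < k) :
    Dominating {1, 3 * (k : ℤ)} (cyclicDominatingSet k) := by
  rw [dominating_pair_iff]
  intro x
  have hdiv := Int.mul_ediv_add_emod (2 * x) (6 * k - 1)
  have r_nonneg := Int.emod_nonneg (2 * x) (show 6 * (k : ℤ) - 1 ≠ 0 by omega)
  have r_lt := Int.emod_lt_of_pos (2 * x) (show 0 < 6 * (k : ℤ) - 1 by omega)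
  set q := 2 * x / (6 * k - 1)
  set r := 2 * x % (6 * k - 1)
  obtain ⟨i, hi⟩ := Int.eq_ofNat_of_zero_le (show 0 ≤ r / 3 by omega)
  have i_lt : i < 2 * k := by omega
  have hr : r = 3 * i ∨ r = 3 * i + 1 ∨ r = 3 * i + 2 := by omega
  rcases hr with hr | hr | hr
  · refine .inl (mem_cyclicDominatingSet_of_two_mul_modEq i_lt ?_)
    exact Int.modEq_of_dvd ⟨-q, by linear_combination hdiv - hr⟩
  · refine .inr (.inr (mem_cyclicDominatingSet_of_two_mul_modEq i_lt ?_))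
    exact Int.modEq_of_dvd ⟨1 - q, by linear_combination hdiv - hr⟩
  · refine .inr (.inl (mem_cyclicDominatingSet_of_two_mul_modEq i_lt ?_))
    exact Int.modEq_of_dvd ⟨-q, by linear_combination hdiv - hr⟩

lemma IsInvariantMean.cyclicDominatingSet_le {m : Set ℤ → ℝ} (hm : IsInvariantMean ℤ m)
    (hk : 0 < k) : m (cyclicDominatingSet k) ≤ 2 * (k : ℝ) / (6 * k - 1) := by
  have h := hm.setOf_exists_modEq_le (p := 6 * k - 1) (by omega) (Finset.range (2 * k))
    fun i => 9 * k * i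
  rw [Finset.card_range] at h
  exact_mod_cast h

end UpperBound

theorem dominationRatio_one_three_mul {k : ℕ} (hk : 0 < k) :
    dominationRatio {1, 3 * (k : ℤ)} = 2 * (k : ℝ) / (6 * k - 1) := by
  have lower (D : Set ℤ) (hD : Dominating {1, 3 * (k : ℤ)} D) :
      2 * (k : ℝ) / (6 * k - 1) ≤ lowerDensity D := by
    obtain ⟨m, hm, hmD⟩ := exists_isInvariantMean_eq_lowerDensity D
    exact hmD ▸ hD.le_mean hk hm
  have upper : lowerDensity (cyclicDominatingSet k) ≤ 2 * (k : ℝ) / (6 * k - 1) := by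
    obtain ⟨m, hm, hmD⟩ := exists_isInvariantMean_eq_lowerDensity (cyclicDominatingSet k)
    exact hmD ▸ hm.cyclicDominatingSet_le hk
  have hcyclic := dominating_cyclicDominatingSet hk
  refine IsLeast.csInf_eq ⟨⟨_, hcyclic, upper.antisymm (lower _ hcyclic)⟩, ?_⟩
  rintro _ ⟨D, hD, rfl⟩
  exact lower D hD

theorem stmt_11 (k : ℤ) (hk : 1 ≤ k) :
    dominationRatio {1, 3 * k} = 2 * (k : ℝ) / (6 * (k : ℝ) - 1) ∧
      (2 ≤ k → dominationRatio {1, -3 * k + 1} = 2 * (k : ℝ) / (6 * (k : ℝ) - 1)) := by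
  have ratio : dominationRatio {1, 3 * k} = 2 * (k : ℝ) / (6 * (k : ℝ) - 1) := by
    lift k to ℕ using by omega
    exact_mod_cast dominationRatio_one_three_mul (by exact_mod_cast hk)
  refine ⟨ratio, fun _ => ?_⟩
  rw [show -3 * k + 1 = 1 - 3 * k by ring, dominationRatio_sub_right, ratio]
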